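/- arXiv:1805.07723 — 4 statements merged into one kernel-verified Lean document; each statement's English description precedes it below -/
import Mathlib

section
/- (Cost-weighted two-point risk bound.) Let Θ be a finite parameter space, ρ : Θ × Θ → ℝ₊ a pseudometric, and for each θ ∈ Θ let P_θⁿ be the n-fold product of a probability measure P_θ on an observation space O. Fix c ∈ (0,1) and write c̄ := 1−c. Then for any two parameters θ ≠ θ′ and any randomized estimator θ̂ (a Markov kernel from Oⁿ to Θ), c · E_{O ∼ P_θⁿ} E_{θ̃ ∼ θ̂(O)}[ρ(θ, θ̃)] + c̄ · E_{O ∼ P_{θ′}ⁿ} E_{θ̃ ∼ θ̂(O)}[ρ(θ′, θ̃)] ≥ ρ(θ, θ′) · ( min(c, c̄) − I_{f_c}(P_θⁿ, P_{θ′}ⁿ) ). -/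
open MeasureTheory ProbabilityTheory

/-- The `c`-primitive `f`-divergence in the form
`I_{f_c}(P,Q) = min(c, 1−c) − ∫ min((1−c)·dQ, c·dP)`, the integral being taken of the
densities with respect to the common dominating measure `P + Q`. -/
noncomputable def Ifc {Ω : Type*} [MeasurableSpace Ω] (c : ℝ) (P Q : Measure Ω) : ℝ :=
  min c (1 - c)
    - ∫ x, min ((1 - c) * ((Q.rnDeriv (P + Q)) x).toReal)
              (c * ((P.rnDeriv (P + Q)) x).toReal) ∂(P + Q)

theorem two_point_aux {Ω : Type*} [MeasurableSpace Ω] (μ ν : Measure Ω)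
    [IsProbabilityMeasure μ] [IsProbabilityMeasure ν] (g h : Ω → ℝ) (r c : ℝ)
    (hc0 : 0 ≤ c) (hc1 : 0 ≤ 1 - c)
    (hg0 : ∀ x, 0 ≤ g x) (hh0 : ∀ x, 0 ≤ h x) (hgh : ∀ x, r ≤ g x + h x)
    (hg : Integrable g μ) (hh : Integrable h ν) :
    r * ∫ x, min ((1 - c) * ((ν.rnDeriv (μ + ν)) x).toReal)
              (c * ((μ.rnDeriv (μ + ν)) x).toReal) ∂(μ + ν)
      ≤ c * ∫ x, g x ∂μ + (1 - c) * ∫ x, h x ∂ν := by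
  have h1 : μ ≪ μ + ν := Measure.absolutelyContinuous_of_le (Measure.le_add_right le_rfl)
  have h2 : ν ≪ μ + ν := Measure.absolutelyContinuous_of_le (Measure.le_add_left le_rfl)
  rw [← integral_rnDeriv_smul h1, ← integral_rnDeriv_smul h2, ← integral_const_mul,
    ← integral_const_mul, ← integral_const_mul]
  have i1 := ((integrable_rnDeriv_smul_iff h1).2 hg).const_mul c
  have i2 := ((integrable_rnDeriv_smul_iff h2).2 hh).const_mul (1 - c)
  rw [← integral_add i1 i2]
  have j1 : Integrable (fun x => ((μ.rnDeriv (μ + ν)) x).toReal) (μ + ν) :=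
    Measure.integrable_toReal_rnDeriv
  have j2 : Integrable (fun x => ((ν.rnDeriv (μ + ν)) x).toReal) (μ + ν) :=
    Measure.integrable_toReal_rnDeriv
  refine integral_mono (((j2.const_mul (1 - c)).inf (j1.const_mul c)).const_mul r)
    (i1.add i2) fun x => ?_
  simp only [smul_eq_mul]
  set a := ((μ.rnDeriv (μ + ν)) x).toReal
  set b := ((ν.rnDeriv (μ + ν)) x).toReal
  have ha : 0 ≤ a := ENNReal.toReal_nonneg
  have hb : 0 ≤ b := ENNReal.toReal_nonneg
  have m0 : 0 ≤ min ((1 - c) * b) (c * a) := le_min (by positivity) (by positivity)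
  have e1 := mul_le_mul_of_nonneg_right (hgh x) m0
  have e2 := mul_le_mul_of_nonneg_left (min_le_right ((1 - c) * b) (c * a)) (hg0 x)
  have e3 := mul_le_mul_of_nonneg_left (min_le_left ((1 - c) * b) (c * a)) (hh0 x)
  change _ ≤ c * (a * g x) + (1 - c) * (b * h x)
  nlinarith

theorem integrable_inner_aux {Ω Θ : Type*} [MeasurableSpace Ω] [Fintype Θ] [MeasurableSpace Θ]
    [MeasurableSingletonClass Θ] (μ : Measure Ω) [IsProbabilityMeasure μ]
    (κ : Kernel Ω Θ) [IsMarkovKernel κ] (f : Θ → ℝ) :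
    Integrable (fun o => ∫ t, f t ∂(κ o)) μ := by
  have : (fun o => ∫ t, f t ∂(κ o)) = fun o => ∑ t, (κ o).real {t} * f t := by
    funext o
    rw [integral_fintype Integrable.of_finite]
    simp
  rw [this]
  refine integrable_finset_sum _ fun t _ => Integrable.mul_const ?_ _
  refine Integrable.of_bound (C := 1)
    ((κ.measurable_coe (measurableSet_singleton t)).ennreal_toReal.aestronglyMeasurable) ?_
  refine Filter.Eventually.of_forall fun o => ?_
  rw [Real.norm_of_nonneg measureReal_nonneg]
  exact measureReal_le_one

/-- cost-weighted two-point risk bound. For any randomized estimator `κ`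
(a Markov kernel from `Oⁿ` to the finite parameter space `Θ`), pseudometric `ρ`, and
parameters `θ ≠ θ'`:
`c·E_{P_θⁿ}E_{κ}[ρ(θ,·)] + (1−c)·E_{P_{θ'}ⁿ}E_{κ}[ρ(θ',·)] ≥ ρ(θ,θ')·(min(c,1−c) − I_{f_c}(P_θⁿ, P_{θ'}ⁿ))`. -/
theorem cost_weighted_two_point_bound
    {O Θ : Type*} [MeasurableSpace O] [Fintype Θ] [MeasurableSpace Θ]
    [MeasurableSingletonClass Θ]
    (n : ℕ) (P : Θ → Measure O) [∀ θ, IsProbabilityMeasure (P θ)]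
    (ρ : Θ → Θ → ℝ) (hρ_nonneg : ∀ a b, 0 ≤ ρ a b) (hρ_self : ∀ a, ρ a a = 0)
    (hρ_symm : ∀ a b, ρ a b = ρ b a) (hρ_tri : ∀ a b d, ρ a d ≤ ρ a b + ρ b d)
    (c : ℝ) (hc : c ∈ Set.Ioo (0 : ℝ) 1)
    (θ θ' : Θ) (hθ : θ ≠ θ')
    (κ : Kernel (Fin n → O) Θ) [IsMarkovKernel κ] :
    c * ∫ o, (∫ t, ρ θ t ∂(κ o)) ∂(Measure.pi fun _ : Fin n => P θ)
      + (1 - c) * ∫ o, (∫ t, ρ θ' t ∂(κ o)) ∂(Measure.pi fun _ : Fin n => P θ')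
    ≥ ρ θ θ' * (min c (1 - c)
        - Ifc c (Measure.pi fun _ : Fin n => P θ) (Measure.pi fun _ : Fin n => P θ')) := by
  unfold Ifc
  rw [sub_sub_cancel]
  refine two_point_aux _ _ _ _ _ _ hc.1.le (by linarith [hc.2])
    (fun o => integral_nonneg fun t => hρ_nonneg _ _)
    (fun o => integral_nonneg fun t => hρ_nonneg _ _) (fun o => ?_)
    (integrable_inner_aux _ κ _) (integrable_inner_aux _ κ _)
  rw [← integral_add Integrable.of_finite Integrable.of_finite]
  calc ρ θ θ' = ∫ t, ρ θ θ' ∂(κ o) := by simp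
    _ ≤ _ := integral_mono Integrable.of_finite Integrable.of_finite fun t => by
      have := hρ_tri θ t θ'
      rw [hρ_symm t θ'] at this
      exact this
end

section
/- (Cost-dependent Le Cam bound.) Let Θ be a finite parameter space, ρ : Θ × Θ → ℝ₊ a pseudometric, and for each θ ∈ Θ let P_θⁿ be the n-fold product of a probability measure P_θ on an observation space O. For any c ∈ (0,1), the minimax risk R*_ρ := inf over randomized estimators θ̂ of sup over θ ∈ Θ of E_{O ∼ P_θⁿ} E_{θ̃ ∼ θ̂(O)}[ρ(θ, θ̃)] satisfies R*_ρ ≥ sup over pairs θ ≠ θ′ of ρ(θ, θ′) · ( min(c, 1−c) − I_{f_c}(P_θⁿ, P_{θ′}ⁿ) ). -/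
open MeasureTheory ProbabilityTheory

lemma lecam_aux {Ω : Type*} [MeasurableSpace Ω] (P Q : Measure Ω) [IsProbabilityMeasure P]
    [IsProbabilityMeasure Q] (f g : Ω → ℝ) (hf : Measurable f) (hg : Measurable g)
    (C r c : ℝ) (hf0 : ∀ x, 0 ≤ f x) (hg0 : ∀ x, 0 ≤ g x) (hfC : ∀ x, f x ≤ C)
    (hgC : ∀ x, g x ≤ C) (hr : ∀ x, r ≤ f x + g x) (hc0 : 0 < c) (hc1 : c < 1) :
    r * (min c (1 - c) - Ifc c P Q) ≤ c * ∫ x, f x ∂P + (1 - c) * ∫ x, g x ∂Q := by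
  have hP : P ≪ P + Q := Measure.AbsolutelyContinuous.rfl.add_right Q
  have hQ : Q ≪ P + Q := by
    rw [add_comm]; exact Measure.AbsolutelyContinuous.rfl.add_right P
  have fP : Integrable f P := Integrable.of_bound hf.aestronglyMeasurable C
    (.of_forall fun x => by rw [Real.norm_of_nonneg (hf0 x)]; exact hfC x)
  have gQ : Integrable g Q := Integrable.of_bound hg.aestronglyMeasurable C
    (.of_forall fun x => by rw [Real.norm_of_nonneg (hg0 x)]; exact hgC x)
  have ip : Integrable (fun x => ((P.rnDeriv (P + Q)) x).toReal) (P + Q) :=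
    Measure.integrable_toReal_rnDeriv
  have iq : Integrable (fun x => ((Q.rnDeriv (P + Q)) x).toReal) (P + Q) :=
    Measure.integrable_toReal_rnDeriv
  have ipf := (integrable_rnDeriv_smul_iff hP (f := f)).2 fP
  have iqg := (integrable_rnDeriv_smul_iff hQ (f := g)).2 gQ
  rw [← integral_rnDeriv_smul hP (f := f), ← integral_rnDeriv_smul hQ (f := g)]
  simp only [smul_eq_mul] at ipf iqg ⊢
  rw [Ifc, sub_sub_cancel, ← integral_const_mul, ← integral_const_mul, ← integral_const_mul,
    ← integral_add (ipf.const_mul c) (iqg.const_mul (1 - c))]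
  refine integral_mono (((iq.const_mul (1 - c)).inf (ip.const_mul c)).const_mul r)
    ((ipf.const_mul c).add (iqg.const_mul (1 - c))) fun x => ?_
  simp only
  set p := ((P.rnDeriv (P + Q)) x).toReal with hp
  set q := ((Q.rnDeriv (P + Q)) x).toReal with hq
  have p0 : 0 ≤ p := ENNReal.toReal_nonneg
  have q0 : 0 ≤ q := ENNReal.toReal_nonneg
  set m := min ((1 - c) * q) (c * p)
  have m0 : 0 ≤ m := le_min (mul_nonneg (by linarith) q0) (mul_nonneg hc0.le p0)
  have m1 : m ≤ (1 - c) * q := min_le_left _ _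
  have m2 : m ≤ c * p := min_le_right _ _
  have h1 := mul_le_mul_of_nonneg_right m1 (hg0 x)
  have h2 := mul_le_mul_of_nonneg_right m2 (hf0 x)
  have h3 := mul_le_mul_of_nonneg_left (hr x) m0
  nlinarith

/-- cost-dependent Le Cam bound. The minimax risk
`R*_ρ = inf_κ sup_θ E_{O∼P_θⁿ} E_{θ̃∼κ(O)}[ρ(θ,θ̃)]` over randomized estimators (Markov
kernels from `Oⁿ` to the finite parameter space `Θ`) satisfies
`R*_ρ ≥ sup_{θ ≠ θ'} ρ(θ,θ')·(min(c,1−c) − I_{f_c}(P_θⁿ, P_{θ'}ⁿ))`. -/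
theorem cost_dependent_le_cam_bound
    {O Θ : Type*} [MeasurableSpace O] [Fintype Θ] [MeasurableSpace Θ]
    [MeasurableSingletonClass Θ]
    (n : ℕ) (P : Θ → Measure O) [∀ θ, IsProbabilityMeasure (P θ)]
    (ρ : Θ → Θ → ℝ) (hρ_nonneg : ∀ a b, 0 ≤ ρ a b) (hρ_self : ∀ a, ρ a a = 0)
    (hρ_symm : ∀ a b, ρ a b = ρ b a) (hρ_tri : ∀ a b d, ρ a d ≤ ρ a b + ρ b d)
    (c : ℝ) (hc : c ∈ Set.Ioo (0 : ℝ) 1) :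
    (⨅ κ : {κ : Kernel (Fin n → O) Θ // IsMarkovKernel κ},
      ⨆ θ : Θ, ∫ o, (∫ t, ρ θ t ∂(κ.1 o)) ∂(Measure.pi fun _ : Fin n => P θ))
    ≥ ⨆ p : {p : Θ × Θ // p.1 ≠ p.2},
        ρ p.1.1 p.1.2 * (min c (1 - c)
          - Ifc c (Measure.pi fun _ : Fin n => P p.1.1)
                  (Measure.pi fun _ : Fin n => P p.1.2)) := by
  have hnn : ∀ (κ : {κ : Kernel (Fin n → O) Θ // IsMarkovKernel κ}) (θ : Θ),
      0 ≤ ∫ o, (∫ t, ρ θ t ∂(κ.1 o)) ∂(Measure.pi fun _ : Fin n => P θ) := fun κ θ =>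
    integral_nonneg fun o => integral_nonneg fun t => hρ_nonneg θ t
  refine Real.iSup_le (fun p => ?_)
    (Real.iInf_nonneg fun κ => Real.iSup_nonneg fun θ => hnn κ θ)
  obtain ⟨⟨a, b⟩, hab⟩ := p
  haveI : Nonempty {κ : Kernel (Fin n → O) Θ // IsMarkovKernel κ} :=
    ⟨⟨Kernel.const _ (Measure.dirac a), inferInstance⟩⟩
  refine le_ciInf fun κ => ?_
  obtain ⟨κ, hκ⟩ := κ
  simp only
  have hint : ∀ (θ : Θ) (o : Fin n → O), Integrable (fun t => ρ θ t) (κ o) := fun θ o =>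
    Integrable.of_finite
  have hmeas : ∀ θ : Θ, Measurable fun o => ∫ t, ρ θ t ∂(κ o) := fun θ => by
    simp_rw [fun o => integral_fintype (hint θ o)]
    refine Finset.measurable_sum _ fun t _ => ?_
    exact ((κ.measurable_coe (measurableSet_singleton t)).ennreal_toReal).smul_const _
  have hle : ∀ (θ t : Θ), ρ θ t ≤ ∑ x, ∑ y, ρ x y := fun θ t =>
    (Finset.single_le_sum (f := fun y => ρ θ y) (fun y _ => hρ_nonneg θ y)
      (Finset.mem_univ t)).trans
    (Finset.single_le_sum (f := fun x => ∑ y, ρ x y)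
      (fun x _ => Finset.sum_nonneg fun y _ => hρ_nonneg x y) (Finset.mem_univ θ))
  have hC : ∀ (θ : Θ) (o : Fin n → O), ∫ t, ρ θ t ∂(κ o) ≤ ∑ x, ∑ y, ρ x y := fun θ o => by
    have := integral_mono (hint θ o) (integrable_const (∑ x, ∑ y, ρ x y)) (fun t => hle θ t)
    simpa using this
  have hr : ∀ o : Fin n → O, ρ a b ≤ ∫ t, ρ a t ∂(κ o) + ∫ t, ρ b t ∂(κ o) := fun o => by
    rw [← integral_add (hint a o) (hint b o)]
    have := integral_mono (integrable_const (ρ a b)) ((hint a o).add (hint b o))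
      (fun t => by
        have := hρ_tri a t b
        rw [hρ_symm t b] at this
        exact this)
    simpa using this
  have key := lecam_aux (Measure.pi fun _ : Fin n => P a) (Measure.pi fun _ : Fin n => P b)
    _ _ (hmeas a) (hmeas b) _ (ρ a b) c
    (fun o => integral_nonneg fun t => hρ_nonneg a t)
    (fun o => integral_nonneg fun t => hρ_nonneg b t) (hC a) (hC b) hr hc.1 hc.2
  refine key.trans ?_
  have hb : BddAbove (Set.range fun θ : Θ =>
      ∫ o, (∫ t, ρ θ t ∂(κ o)) ∂(Measure.pi fun _ : Fin n => P θ)) :=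
    (Set.finite_range _).bddAbove
  have ha' := mul_le_mul_of_nonneg_left (le_ciSup hb a) hc.1.le
  have hb' := mul_le_mul_of_nonneg_left (le_ciSup hb b) (sub_nonneg.2 hc.2.le)
  linarith
end

section
/- (Cost-dependent Bayesian lower bound.) Let Θ be a finite parameter space, ρ : Θ × Θ → ℝ₊ a pseudometric, and for each θ ∈ Θ let P_θⁿ be the n-fold product of a probability measure P_θ on an observation space O. Let μ be any joint probability distribution of a random pair (θ, θ′) ∈ Θ × Θ whose two marginal distributions are equal. Then for any c ∈ (0,1), the minimax risk R*_ρ satisfies R*_ρ ≥ E_{(θ,θ′) ∼ μ}[ ρ(θ, θ′) · ( min(c, 1−c) − I_{f_c}(P_θⁿ, P_{θ′}ⁿ) ) ]. -/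
open MeasureTheory ProbabilityTheory

lemma two_point_aux_s13 {Ω : Type*} [MeasurableSpace Ω] (c : ℝ) (hc : c ∈ Set.Ioo (0 : ℝ) 1)
    (P Q : Measure Ω) [IsProbabilityMeasure P] [IsProbabilityMeasure Q]
    (f g : Ω → ℝ) (hf : Measurable f) (hg : Measurable g) (r C : ℝ) (hr : 0 ≤ r)
    (hf0 : ∀ x, 0 ≤ f x) (hg0 : ∀ x, 0 ≤ g x) (hfC : ∀ x, f x ≤ C) (hgC : ∀ x, g x ≤ C)
    (hfg : ∀ x, r ≤ f x + g x) :
    r * (min c (1 - c) - Ifc c P Q) ≤ c * ∫ x, f x ∂P + (1 - c) * ∫ x, g x ∂Q := by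
  have hP : P ≪ P + Q := Measure.AbsolutelyContinuous.rfl.add_right Q
  have hQ : Q ≪ P + Q := by
    rw [add_comm]; exact Measure.AbsolutelyContinuous.rfl.add_right P
  have hfi : Integrable f P := Integrable.of_bound hf.aestronglyMeasurable C
    (Filter.Eventually.of_forall fun x => by
      rw [Real.norm_eq_abs, abs_of_nonneg (hf0 x)]; exact hfC x)
  have hgi : Integrable g Q := Integrable.of_bound hg.aestronglyMeasurable C
    (Filter.Eventually.of_forall fun x => by
      rw [Real.norm_eq_abs, abs_of_nonneg (hg0 x)]; exact hgC x)
  have hfi' := (integrable_rnDeriv_smul_iff hP).2 hfi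
  have hgi' := (integrable_rnDeriv_smul_iff hQ).2 hgi
  have hpi : Integrable (fun x => (P.rnDeriv (P + Q) x).toReal) (P + Q) :=
    Measure.integrable_toReal_rnDeriv
  have hqi : Integrable (fun x => (Q.rnDeriv (P + Q) x).toReal) (P + Q) :=
    Measure.integrable_toReal_rnDeriv
  rw [← integral_rnDeriv_smul hP, ← integral_rnDeriv_smul hQ, ← integral_const_mul,
    ← integral_const_mul, ← integral_add (hfi'.const_mul c) (hgi'.const_mul (1 - c))]
  unfold Ifc
  rw [sub_sub_cancel, ← integral_const_mul]
  refine integral_mono (((hqi.const_mul (1 - c)).inf (hpi.const_mul c)).const_mul r)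
    ((hfi'.const_mul c).add (hgi'.const_mul (1 - c))) fun x => ?_
  simp only [smul_eq_mul, Pi.add_apply]
  set p := (P.rnDeriv (P + Q) x).toReal with hp
  set q := (Q.rnDeriv (P + Q) x).toReal with hq
  have hp0 : 0 ≤ p := ENNReal.toReal_nonneg
  have hq0 : 0 ≤ q := ENNReal.toReal_nonneg
  have hc0 : 0 ≤ c := hc.1.le
  have hc1 : 0 ≤ 1 - c := sub_nonneg.2 hc.2.le
  have hm0 : 0 ≤ min ((1 - c) * q) (c * p) := le_min (by positivity) (by positivity)
  have h1 := mul_le_mul_of_nonneg_right (min_le_right ((1 - c) * q) (c * p)) (hf0 x)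
  have h2 := mul_le_mul_of_nonneg_right (min_le_left ((1 - c) * q) (c * p)) (hg0 x)
  have h3 := mul_le_mul_of_nonneg_right (hfg x) hm0
  show r * min ((1 - c) * q) (c * p) ≤ _
  nlinarith

/-- cost-dependent Bayesian lower bound. For any joint distribution `μ` of a
pair `(θ, θ')` on `Θ × Θ` with equal marginals, the minimax risk
`R*_ρ = inf_κ sup_θ E_{O∼P_θⁿ} E_{θ̃∼κ(O)}[ρ(θ,θ̃)]` satisfies
`R*_ρ ≥ E_{(θ,θ')∼μ}[ρ(θ,θ')·(min(c,1−c) − I_{f_c}(P_θⁿ, P_{θ'}ⁿ))]`. -/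
theorem cost_dependent_bayesian_lower_bound
    {O Θ : Type*} [MeasurableSpace O] [Fintype Θ] [MeasurableSpace Θ]
    [MeasurableSingletonClass Θ]
    (n : ℕ) (P : Θ → Measure O) [∀ θ, IsProbabilityMeasure (P θ)]
    (ρ : Θ → Θ → ℝ) (hρ_nonneg : ∀ a b, 0 ≤ ρ a b) (hρ_self : ∀ a, ρ a a = 0)
    (hρ_symm : ∀ a b, ρ a b = ρ b a) (hρ_tri : ∀ a b d, ρ a d ≤ ρ a b + ρ b d)
    (μ : Measure (Θ × Θ)) [IsProbabilityMeasure μ]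
    (hμ : μ.map Prod.fst = μ.map Prod.snd)
    (c : ℝ) (hc : c ∈ Set.Ioo (0 : ℝ) 1) :
    (⨅ κ : {κ : Kernel (Fin n → O) Θ // IsMarkovKernel κ},
      ⨆ θ : Θ, ∫ o, (∫ t, ρ θ t ∂(κ.1 o)) ∂(Measure.pi fun _ : Fin n => P θ))
    ≥ ∫ q, ρ q.1 q.2 * (min c (1 - c)
          - Ifc c (Measure.pi fun _ : Fin n => P q.1)
                  (Measure.pi fun _ : Fin n => P q.2)) ∂μ := by
  have hne : Nonempty Θ := by
    obtain ⟨q⟩ := μ.nonempty_of_neZero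
    exact ⟨q.1⟩
  obtain ⟨t0⟩ := hne
  haveI : Nonempty {κ : Kernel (Fin n → O) Θ // IsMarkovKernel κ} :=
    ⟨⟨Kernel.const _ (Measure.dirac t0), inferInstance⟩⟩
  refine le_ciInf fun κ => ?_
  obtain ⟨κ, hκ⟩ := κ
  dsimp only
  have hint : ∀ (θ : Θ) (o : Fin n → O), Integrable (fun t => ρ θ t) (κ o) :=
    fun θ o => Integrable.of_finite
  have hmeas : ∀ θ, Measurable fun o => ∫ t, ρ θ t ∂(κ o) := fun θ =>
    ((measurable_of_finite (ρ θ)).stronglyMeasurable.integral_kernel (κ := κ)).measurable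
  have h0 : ∀ θ o, 0 ≤ ∫ t, ρ θ t ∂(κ o) := fun θ o =>
    integral_nonneg fun t => hρ_nonneg θ t
  set C : ℝ := ∑ a, ∑ b, ρ a b with hC
  have hρC : ∀ a b, ρ a b ≤ C := fun a b =>
    (Finset.single_le_sum (f := fun b => ρ a b) (fun b _ => hρ_nonneg a b)
      (Finset.mem_univ b)).trans
    (Finset.single_le_sum (f := fun a => ∑ b, ρ a b)
      (fun a _ => Finset.sum_nonneg fun b _ => hρ_nonneg a b) (Finset.mem_univ a))
  have hgC : ∀ θ o, ∫ t, ρ θ t ∂(κ o) ≤ C := fun θ o => by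
    have := integral_mono (hint θ o) (integrable_const C) fun t => hρC θ t
    simpa using this
  have hsup : ∀ θ, ∫ o, (∫ t, ρ θ t ∂(κ o)) ∂(Measure.pi fun _ : Fin n => P θ) ≤
      ⨆ θ : Θ, ∫ o, (∫ t, ρ θ t ∂(κ o)) ∂(Measure.pi fun _ : Fin n => P θ) :=
    fun θ => le_ciSup (Set.finite_range fun θ : Θ =>
      ∫ o, (∫ t, ρ θ t ∂(κ o)) ∂(Measure.pi fun _ : Fin n => P θ)).bddAbove θ
  set S := ⨆ θ : Θ, ∫ o, (∫ t, ρ θ t ∂(κ o)) ∂(Measure.pi fun _ : Fin n => P θ) with hS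
  have key : ∀ q : Θ × Θ, ρ q.1 q.2 * (min c (1 - c)
          - Ifc c (Measure.pi fun _ : Fin n => P q.1)
                  (Measure.pi fun _ : Fin n => P q.2)) ≤ S := by
    intro q
    refine (two_point_aux_s13 c hc _ _ _ _ (hmeas q.1) (hmeas q.2) (ρ q.1 q.2) C
      (hρ_nonneg _ _) (h0 _) (h0 _) (hgC _) (hgC _) fun o => ?_).trans ?_
    · rw [← integral_add (hint _ _) (hint _ _)]
      have := integral_mono (integrable_const (μ := κ o) (ρ q.1 q.2))
        ((hint q.1 o).add (hint q.2 o)) fun t => by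
          have := hρ_tri q.1 t q.2
          rw [hρ_symm t] at this
          exact this
      simpa using this
    · have h1 := mul_le_mul_of_nonneg_left (hsup q.1) hc.1.le
      have h2 := mul_le_mul_of_nonneg_left (hsup q.2) (sub_nonneg.2 hc.2.le)
      linarith
  have := integral_mono (μ := μ) Integrable.of_finite (integrable_const S) key
  simpa using this
end

section
/- (Cost-dependent Assouad lemma.) Let d ∈ ℕ, let the parameter space be the hypercube Θ = {−1,1}^d, and for each θ ∈ Θ let P_θⁿ be the n-fold product of a probability measure P_θ on an observation space O. Let ρ_Ha(θ, θ′) := Σ_{i=1}^d 1[θ_i ≠ θ′_i] be the Hamming distance. Then for any c ∈ (0,1), the minimax risk R*_{ρ_Ha} := inf over randomized estimators θ̂ of max over θ ∈ Θ of E_{O ∼ P_θⁿ} E_{θ̃ ∼ θ̂(O)}[ρ_Ha(θ, θ̃)] satisfies R*_{ρ_Ha} ≥ d · ( min(c, 1−c) − max over pairs θ, θ′ with ρ_Ha(θ, θ′) = 1 of I_{f_c}(P_θⁿ, P_{θ′}ⁿ) ). -/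
open MeasureTheory ProbabilityTheory

lemma key_two {Ω : Type*} [MeasurableSpace Ω] (c : ℝ) (hc : c ∈ Set.Ioo (0 : ℝ) 1)
    (μ ν : Measure Ω) [IsProbabilityMeasure μ] [IsProbabilityMeasure ν]
    (g h : Ω → ℝ) (hg : Measurable g) (hh : Measurable h) (hg0 : ∀ x, 0 ≤ g x)
    (hh0 : ∀ x, 0 ≤ h x) (hgh : ∀ x, g x + h x = 1) :
    min c (1 - c) - Ifc c μ ν ≤ c * ∫ x, g x ∂μ + (1 - c) * ∫ x, h x ∂ν := by
  have hμ : μ ≪ μ + ν := Measure.absolutelyContinuous_of_le (Measure.le_add_right le_rfl)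
  have hν : ν ≪ μ + ν := Measure.absolutelyContinuous_of_le (Measure.le_add_left le_rfl)
  unfold Ifc
  rw [sub_sub_cancel, ← integral_rnDeriv_smul hμ, ← integral_rnDeriv_smul hν,
    ← integral_const_mul, ← integral_const_mul]
  have ig : Integrable g μ := by
    refine Integrable.of_bound hg.aestronglyMeasurable 1 (Filter.Eventually.of_forall fun x => ?_)
    rw [Real.norm_eq_abs, abs_of_nonneg (hg0 x)]
    linarith [hgh x, hh0 x]
  have ih : Integrable h ν := by
    refine Integrable.of_bound hh.aestronglyMeasurable 1 (Filter.Eventually.of_forall fun x => ?_)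
    rw [Real.norm_eq_abs, abs_of_nonneg (hh0 x)]
    linarith [hgh x, hg0 x]
  have ig' := ((integrable_rnDeriv_smul_iff hμ).2 ig).const_mul c
  have ih' := ((integrable_rnDeriv_smul_iff hν).2 ih).const_mul (1 - c)
  rw [← integral_add ig' ih']
  refine integral_mono ?_ (ig'.add ih') fun x => ?_
  · exact (Measure.integrable_toReal_rnDeriv.const_mul _).inf
      (Measure.integrable_toReal_rnDeriv.const_mul _)
  · simp only [smul_eq_mul, Pi.add_apply]
    have h1 := min_le_left ((1 - c) * ((ν.rnDeriv (μ + ν)) x).toReal)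
              (c * ((μ.rnDeriv (μ + ν)) x).toReal)
    have h2 := min_le_right ((1 - c) * ((ν.rnDeriv (μ + ν)) x).toReal)
              (c * ((μ.rnDeriv (μ + ν)) x).toReal)
    have h3 := mul_le_mul_of_nonneg_right h1 (hh0 x)
    have h4 := mul_le_mul_of_nonneg_right h2 (hg0 x)
    have h5 : g x = 1 - h x := by linarith [hgh x]
    rw [h5] at h4 ⊢
    nlinarith

def flipAt {d : ℕ} (i : Fin d) (θ : Fin d → Bool) : Fin d → Bool :=
  Function.update θ i (!θ i)

lemma flipAt_invol {d : ℕ} (i : Fin d) : Function.Involutive (flipAt i) := by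
  intro θ
  simp [flipAt]

lemma hamming_flipAt {d : ℕ} (i : Fin d) (θ : Fin d → Bool) :
    hammingDist θ (flipAt i θ) = 1 := by
  unfold hammingDist
  rw [Finset.card_eq_one]
  refine ⟨i, ?_⟩
  ext j
  rw [Finset.mem_filter, Finset.mem_singleton]
  by_cases h : j = i
  · subst h; simp [flipAt]
  · simp [flipAt, h]

lemma pair_sum {d : ℕ} (i : Fin d) (F : (Fin d → Bool) → ℝ) :
    ∑ θ, F θ = ∑ θ : Fin d → Bool, if θ i = true then F θ + F (flipAt i θ) else 0 := by
  have h : ∑ θ : Fin d → Bool, (if θ i = true then 0 else F θ)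
      = ∑ θ : Fin d → Bool, if θ i = true then F (flipAt i θ) else 0 := by
    rw [← Equiv.sum_comp (flipAt_invol i).toPerm]
    refine Finset.sum_congr rfl fun θ _ => ?_
    cases h : θ i <;> simp [flipAt, h]
  calc ∑ θ, F θ = ∑ θ : Fin d → Bool, (if θ i = true then F θ else 0)
        + ∑ θ : Fin d → Bool, (if θ i = true then 0 else F θ) := by
        rw [← Finset.sum_add_distrib]
        refine Finset.sum_congr rfl fun θ _ => ?_
        split_ifs <;> simp
    _ = _ := by
        rw [h, ← Finset.sum_add_distrib]
        refine Finset.sum_congr rfl fun θ _ => ?_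
        split_ifs <;> simp

noncomputable def prior {d : ℕ} (c : ℝ) (θ : Fin d → Bool) : ℝ :=
  ∏ i, if θ i = true then c else 1 - c

lemma prior_sum {d : ℕ} (c : ℝ) : ∑ θ : Fin d → Bool, prior c θ = 1 := by
  unfold prior
  rw [← Fintype.prod_sum (fun (_ : Fin d) (b : Bool) => if b = true then c else 1 - c)]
  simp

lemma prior_nonneg {d : ℕ} (c : ℝ) (hc : c ∈ Set.Ioo (0 : ℝ) 1) (θ : Fin d → Bool) :
    0 ≤ prior c θ := by
  refine Finset.prod_nonneg fun i _ => ?_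
  split_ifs <;> linarith [hc.1, hc.2]

lemma prior_split {d : ℕ} (c : ℝ) (hc : c ∈ Set.Ioo (0 : ℝ) 1) (i : Fin d)
    (θ : Fin d → Bool) (h : θ i = true) :
    ∃ w : ℝ, 0 ≤ w ∧ prior c θ = w * c ∧ prior c (flipAt i θ) = w * (1 - c) := by
  refine ⟨∏ j ∈ Finset.univ.erase i, if θ j = true then c else 1 - c,
    Finset.prod_nonneg fun j _ => ?_, ?_, ?_⟩
  · split_ifs <;> linarith [hc.1, hc.2]
  · unfold prior
    rw [← Finset.prod_erase_mul _ _ (Finset.mem_univ i), h]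
    simp
  · unfold prior
    rw [← Finset.prod_erase_mul _ _ (Finset.mem_univ i)]
    congr 1
    · refine Finset.prod_congr rfl fun j hj => ?_
      simp [flipAt, Finset.ne_of_mem_erase hj]
    · simp [flipAt, h]

lemma risk_inner {d : ℕ} (m : Measure (Fin d → Bool)) [IsProbabilityMeasure m]
    (θ : Fin d → Bool) :
    ∫ t, (hammingDist θ t : ℝ) ∂m = ∑ i, m.real {t | t i ≠ θ i} := by
  have : ∀ t : Fin d → Bool, (hammingDist θ t : ℝ)
      = ∑ i, Set.indicator {t : Fin d → Bool | t i ≠ θ i} (fun _ => (1 : ℝ)) t := by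
    intro t
    simp [hammingDist, Set.indicator_apply, Finset.card_filter, ne_comm, eq_comm]
  simp_rw [this]
  rw [integral_finsetSum _ fun i _ => Integrable.of_finite]
  refine Finset.sum_congr rfl fun i _ => ?_
  rw [integral_indicator (Set.toFinite _).measurableSet]
  simp

/-- cost-dependent Assouad lemma. With parameter space the hypercube
`{−1,1}^d` (encoded as `Fin d → Bool`) and Hamming loss `ρ_Ha = hammingDist`, the minimax
risk over randomized estimators (Markov kernels from `Oⁿ` to the hypercube) satisfies
`R*_{ρ_Ha} ≥ d·(min(c,1−c) − max_{ρ_Ha(θ,θ')=1} I_{f_c}(P_θⁿ, P_{θ'}ⁿ))`. -/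
theorem cost_dependent_assouad
    {O : Type*} [MeasurableSpace O] (d n : ℕ)
    (P : (Fin d → Bool) → Measure O) [∀ θ, IsProbabilityMeasure (P θ)]
    (c : ℝ) (hc : c ∈ Set.Ioo (0 : ℝ) 1) :
    (⨅ κ : {κ : Kernel (Fin n → O) (Fin d → Bool) // IsMarkovKernel κ},
      ⨆ θ : Fin d → Bool,
        ∫ o, (∫ t, (hammingDist θ t : ℝ) ∂(κ.1 o)) ∂(Measure.pi fun _ : Fin n => P θ))
    ≥ d * (min c (1 - c)
        - ⨆ q : {q : (Fin d → Bool) × (Fin d → Bool) // hammingDist q.1 q.2 = 1},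
            Ifc c (Measure.pi fun _ : Fin n => P q.1.1)
                  (Measure.pi fun _ : Fin n => P q.1.2)) := by
  haveI : Nonempty {κ : Kernel (Fin n → O) (Fin d → Bool) // IsMarkovKernel κ} :=
    ⟨⟨Kernel.const _ (Measure.dirac fun _ => true), inferInstance⟩⟩
  refine le_ciInf fun κ => ?_
  obtain ⟨κ, hκ⟩ := κ
  set S := ⨆ q : {q : (Fin d → Bool) × (Fin d → Bool) // hammingDist q.1 q.2 = 1},
            Ifc c (Measure.pi fun _ : Fin n => P q.1.1)
                  (Measure.pi fun _ : Fin n => P q.1.2) with hS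
  set R : (Fin d → Bool) → ℝ := fun θ =>
    ∫ o, (∫ t, (hammingDist θ t : ℝ) ∂(κ o)) ∂(Measure.pi fun _ : Fin n => P θ) with hR
  change _ ≤ ⨆ θ, R θ
  have hmeas : ∀ A : Set (Fin d → Bool), Measurable fun o => (κ o).real A := fun A =>
    (κ.measurable_coe (Set.toFinite A).measurableSet).ennreal_toReal
  set e : Fin d → (Fin d → Bool) → ℝ := fun i θ =>
    ∫ o, (κ o).real {t | t i ≠ θ i} ∂(Measure.pi fun _ : Fin n => P θ) with he
  have hRe : ∀ θ, R θ = ∑ i, e i θ := by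
    intro θ
    simp only [hR, he, risk_inner]
    refine integral_finsetSum _ fun i _ => ?_
    refine Integrable.of_bound (hmeas _).aestronglyMeasurable 1
      (Filter.Eventually.of_forall fun x => ?_)
    rw [Real.norm_eq_abs, abs_of_nonneg measureReal_nonneg]
    exact measureReal_le_one
  have hi : ∀ i, min c (1 - c) - S ≤ ∑ θ, prior c θ * e i θ := by
    intro i
    have : min c (1 - c) - S = ∑ θ : Fin d → Bool, prior c θ * (min c (1 - c) - S) := by
      rw [← Finset.sum_mul, prior_sum, one_mul]
    rw [this, pair_sum i, pair_sum i (fun θ => prior c θ * e i θ)]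
    refine Finset.sum_le_sum fun θ _ => ?_
    split_ifs with h
    · obtain ⟨w, hw, h1, h2⟩ := prior_split c hc i θ h
      rw [h1, h2]
      have hle : Ifc c (Measure.pi fun _ : Fin n => P θ)
          (Measure.pi fun _ : Fin n => P (flipAt i θ)) ≤ S :=
        le_ciSup (f := fun q : {q : (Fin d → Bool) × (Fin d → Bool) //
            hammingDist q.1 q.2 = 1} => Ifc c (Measure.pi fun _ : Fin n => P q.1.1)
                  (Measure.pi fun _ : Fin n => P q.1.2)) (Set.finite_range _).bddAbove
          ⟨(θ, flipAt i θ), hamming_flipAt i θ⟩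
      have hk := key_two c hc (Measure.pi fun _ : Fin n => P θ)
        (Measure.pi fun _ : Fin n => P (flipAt i θ))
        (fun o => (κ o).real {t | t i ≠ θ i}) (fun o => (κ o).real {t | t i ≠ flipAt i θ i})
        (hmeas _) (hmeas _) (fun _ => measureReal_nonneg) (fun _ => measureReal_nonneg)
        (fun o => by
          have hc : {t : Fin d → Bool | t i ≠ flipAt i θ i} = {t | t i ≠ θ i}ᶜ := by
            ext t
            simp [flipAt]
          rw [hc]
          exact probReal_add_probReal_compl (Set.toFinite _).measurableSet)
      have := mul_le_mul_of_nonneg_left ((sub_le_sub_left hle _).trans hk) hw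
      calc _ = w * (min c (1 - c) - S) := by ring
        _ ≤ _ := this
        _ = _ := by simp only [he]; ring
    · exact le_rfl
  calc (d : ℝ) * (min c (1 - c) - S) = ∑ _i : Fin d, (min c (1 - c) - S) := by
        rw [Finset.sum_const, Finset.card_univ, Fintype.card_fin, nsmul_eq_mul]
    _ ≤ ∑ i, ∑ θ, prior c θ * e i θ := Finset.sum_le_sum fun i _ => hi i
    _ = ∑ θ, prior c θ * R θ := by
      rw [Finset.sum_comm]
      simp_rw [hRe, Finset.mul_sum]
    _ ≤ ∑ θ : Fin d → Bool, prior c θ * ⨆ θ, R θ := Finset.sum_le_sum fun θ _ =>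
      mul_le_mul_of_nonneg_left (le_ciSup (Set.finite_range _).bddAbove θ) (prior_nonneg c hc θ)
    _ = ⨆ θ, R θ := by rw [← Finset.sum_mul, prior_sum, one_mul]
end
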